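/- Let G be a countable discrete amenable group acting continuously on a compact metric space (X,d). For any tempered Følner sequence {F_n} in G satisfying lim_{n→∞} |F_n|/log n = ∞, the Bowen topological entropy of the whole space equals the topological entropy: h^B_top(X,{F_n}) = h_top(X,G). -/

import Mathlib

open Filter Set MeasureTheory Topology ENNReal Pointwise

variable {G X : Type*}

section Defs

variable [Group G] [MetricSpace X] [MulAction G X]

/-- The Bowen ball `B_F(x,ε) = {y : d(gx,gy) < ε for all g ∈ F}`. -/
def bowenBall (F : Finset G) (x : X) (ε : ℝ) : Set X :=
  {y : X | ∀ g ∈ F, dist (g • x) (g • y) < ε}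

/-- A Følner sequence: `|F_n ∆ gF_n|/|F_n| → 0` for every `g ∈ G`. -/
def IsFolnerSeq (F : ℕ → Finset G) : Prop :=
  ∀ g : G, Tendsto
    (fun n => ((symmDiff (F n : Set G) ((g * ·) '' (F n : Set G))).ncard : ℝ) / (F n).card)
    atTop (𝓝 0)

/-- A tempered sequence: `|⋃_{k<n} F_k⁻¹ F_n| ≤ C |F_n|` for all `n`. -/
def IsTemperedSeq (F : ℕ → Finset G) : Prop :=
  ∃ C : ℝ, 0 < C ∧ ∀ n : ℕ,
    ((⋃ k ∈ Finset.range n, ((F k : Set G)⁻¹ * (F n : Set G))).ncard : ℝ) ≤ C * (F n).card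

/-- The growth condition `lim_n |F_n| / log n = ∞`. -/
def GrowthCond (F : ℕ → Finset G) : Prop :=
  Tendsto (fun n : ℕ => ((F n).card : ℝ) / Real.log n) atTop atTop

/-- `M(Z,N,ε,s,{F_n})`: infimum of `∑ exp(-s |F_{n_i}|)` over countable families of Bowen
balls `B_{F_{n_i}}(x_i,ε)`, `n_i ≥ N`, covering `Z`. -/
noncomputable def ballM (F : ℕ → Finset G) (Z : Set X) (N : ℕ) (ε s : ℝ) : ℝ≥0∞ :=
  ⨅ (I : Set (X × ℕ)) (_ : I.Countable) (_ : ∀ p ∈ I, N ≤ p.2)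
    (_ : Z ⊆ ⋃ p ∈ I, bowenBall (F p.2) p.1 ε),
    ∑' p : I, ENNReal.ofReal (Real.exp (-s * ((F (p : X × ℕ).2).card : ℝ)))

/-- `M(Z,ε,s,{F_n}) = lim_{N→∞} M(Z,N,ε,s,{F_n})` (the quantity is nondecreasing in `N`). -/
noncomputable def ballMN (F : ℕ → Finset G) (Z : Set X) (ε s : ℝ) : ℝ≥0∞ :=
  ⨆ N : ℕ, ballM F Z N ε s

/-- `M(Z,s,{F_n}) = lim_{ε→0} M(Z,ε,s,{F_n})` (the quantity is nondecreasing as `ε` decreases). -/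
noncomputable def ballMtot (F : ℕ → Finset G) (Z : Set X) (s : ℝ) : ℝ≥0∞ :=
  ⨆ (ε : ℝ) (_ : 0 < ε), ballMN F Z ε s

/-- The Bowen topological entropy of `Z` along `{F_n}`: the critical value of `s` at which
`M(Z,s,{F_n})` jumps from `+∞` to `0`, i.e. `inf {s : M(Z,s,{F_n}) = 0}`. -/
noncomputable def bowenEnt (F : ℕ → Finset G) (Z : Set X) : ℝ≥0∞ :=
  ⨅ (s : ℝ) (_ : ballMtot F Z s = 0), ENNReal.ofReal s

/-- The weighted quantity `W(f,N,ε,s,{F_n})`. -/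
noncomputable def wtW (F : ℕ → Finset G) (f : X → ℝ≥0∞) (N : ℕ) (ε s : ℝ) : ℝ≥0∞ :=
  ⨅ (I : Set (X × ℕ)) (c : X × ℕ → ℝ≥0∞) (_ : I.Countable)
    (_ : ∀ p ∈ I, N ≤ p.2 ∧ 0 < c p ∧ c p < ⊤)
    (_ : ∀ x : X, f x ≤ ∑' p : I, c (p : X × ℕ) *
        (bowenBall (F (p : X × ℕ).2) (p : X × ℕ).1 ε).indicator (fun _ => (1 : ℝ≥0∞)) x),
    ∑' p : I, c (p : X × ℕ) * ENNReal.ofReal (Real.exp (-s * ((F (p : X × ℕ).2).card : ℝ)))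

/-- `W(Z,N,ε,s,{F_n}) = W(χ_Z,N,ε,s,{F_n})`. -/
noncomputable def wtWset (F : ℕ → Finset G) (Z : Set X) (N : ℕ) (ε s : ℝ) : ℝ≥0∞ :=
  wtW F (Z.indicator fun _ => (1 : ℝ≥0∞)) N ε s

/-- `W(Z,ε,s,{F_n}) = lim_{N→∞} W(Z,N,ε,s,{F_n})`. -/
noncomputable def wtWN (F : ℕ → Finset G) (Z : Set X) (ε s : ℝ) : ℝ≥0∞ :=
  ⨆ N : ℕ, wtWset F Z N ε s

/-- `W(Z,s,{F_n}) = lim_{ε→0} W(Z,ε,s,{F_n})`. -/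
noncomputable def wtWtot (F : ℕ → Finset G) (Z : Set X) (s : ℝ) : ℝ≥0∞ :=
  ⨆ (ε : ℝ) (_ : 0 < ε), wtWN F Z ε s

/-- The weighted Bowen topological entropy of `Z` along `{F_n}`. -/
noncomputable def wtBowenEnt (F : ℕ → Finset G) (Z : Set X) : ℝ≥0∞ :=
  ⨅ (s : ℝ) (_ : wtWtot F Z s = 0), ENNReal.ofReal s

/-- A finite open cover of `X`. -/
def IsFinOpenCover (𝒰 : Finset (Set X)) : Prop :=
  (∀ U ∈ 𝒰, IsOpen U) ∧ ⋃₀ (𝒰 : Set (Set X)) = Set.univ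

/-- `N(⋁_{g∈F} g⁻¹𝒰)`: the minimal cardinality of a subcover of the refined cover, whose members
are the sets `X(𝐔) = ⋂_{g∈F} g⁻¹ U_g` with `U_g ∈ 𝒰`. -/
noncomputable def coverNum (𝒰 : Finset (Set X)) (F : Finset G) : ℕ :=
  sInf {k : ℕ | ∃ Λ : Finset (G → Set X), Λ.card = k ∧
    (∀ u ∈ Λ, ∀ g ∈ F, u g ∈ 𝒰) ∧
    (⋃ u ∈ Λ, ⋂ g ∈ F, (fun y => g • y) ⁻¹' u g) = Set.univ}

/-- `h_top(G,𝒰) = lim_n (1/|F_n|) log N(⋁_{g∈F_n} g⁻¹𝒰)` (the limit exists by Ornstein–Weiss,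
hence equals the `limsup`). -/
noncomputable def coverTopEnt (F : ℕ → Finset G) (𝒰 : Finset (Set X)) : ℝ :=
  limsup (fun n => Real.log (coverNum 𝒰 (F n)) / (F n).card) atTop

/-- The topological entropy `h_top(X,G)`, the supremum over finite open covers. -/
noncomputable def topEnt (X : Type*) [MetricSpace X] [MulAction G X] (F : ℕ → Finset G) : ℝ≥0∞ :=
  ⨆ (𝒰 : Finset (Set X)) (_ : IsFinOpenCover 𝒰), ENNReal.ofReal (coverTopEnt F 𝒰)

/-- `M(Z,𝒰,N,s,{F_n})`: infimum of `∑_{𝐔∈Λ} exp(-s m(𝐔))` over collections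
`Λ ⊆ ⋃_{j≥N} 𝒲_{F_j}(𝒰)` covering `Z`; an element `𝐔 ∈ 𝒲_{F_j}(𝒰)` is encoded as a pair
`(j, u)` with `u g ∈ 𝒰` for `g ∈ F_j` (and `u g = ∅` elsewhere), `X(𝐔) = ⋂_{g∈F_j} g⁻¹ (u g)`
and `m(𝐔) = |F_j|`. -/
noncomputable def covM (F : ℕ → Finset G) (𝒰 : Finset (Set X)) (Z : Set X) (N : ℕ) (s : ℝ) :
    ℝ≥0∞ :=
  ⨅ (Λ : Set (ℕ × (G → Set X)))
    (_ : ∀ p ∈ Λ, N ≤ p.1 ∧ (∀ g ∈ F p.1, p.2 g ∈ 𝒰) ∧ (∀ g ∉ F p.1, p.2 g = ∅))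
    (_ : Z ⊆ ⋃ p ∈ Λ, ⋂ g ∈ F p.1, (fun y => g • y) ⁻¹' p.2 g),
    ∑' p : Λ, ENNReal.ofReal (Real.exp (-s * ((F (p : ℕ × (G → Set X)).1).card : ℝ)))

/-- `M(Z,𝒰,s,{F_n}) = lim_{N→∞} M(Z,𝒰,N,s,{F_n})`. -/
noncomputable def covMtot (F : ℕ → Finset G) (𝒰 : Finset (Set X)) (Z : Set X) (s : ℝ) : ℝ≥0∞ :=
  ⨆ N : ℕ, covM F 𝒰 Z N s

/-- The cover-based Bowen topological entropy `h^B_top(𝒰,Z,{F_n}) = inf {s : M(Z,𝒰,s,{F_n}) = 0}`. -/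
noncomputable def covBowenEnt (F : ℕ → Finset G) (𝒰 : Finset (Set X)) (Z : Set X) : ℝ≥0∞ :=
  ⨅ (s : ℝ) (_ : covMtot F 𝒰 Z s = 0), ENNReal.ofReal s

/-- `diam(𝒰) = max {diam U : U ∈ 𝒰}`. -/
noncomputable def coverDiam (𝒰 : Finset (Set X)) : ℝ≥0∞ :=
  ⨆ U ∈ 𝒰, EMetric.diam U

end Defs

section MeasureDefs

variable [Group G] [MetricSpace X] [MulAction G X] [MeasurableSpace X]

/-- The quantity `-(1/m) log μ(B)`, with value `+∞` when `μ B = 0`. -/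
noncomputable def locTerm (μ : Measure X) (B : Set X) (m : ℕ) : ℝ≥0∞ :=
  if μ B = 0 then ⊤ else ENNReal.ofReal (-(Real.log ((μ B).toReal)) / (m : ℝ))

/-- The lower local entropy `h̲_μ^{loc}(x,ε,{F_n}) = liminf_n -(1/|F_n|) log μ(B_{F_n}(x,ε))`. -/
noncomputable def lowLoc (μ : Measure X) (F : ℕ → Finset G) (x : X) (ε : ℝ) : ℝ≥0∞ :=
  liminf (fun n => locTerm μ (bowenBall (F n) x ε) (F n).card) atTop

/-- The upper local entropy `limsup_n -(1/|F_n|) log μ(B_{F_n}(x,ε))`. -/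
noncomputable def upLoc (μ : Measure X) (F : ℕ → Finset G) (x : X) (ε : ℝ) : ℝ≥0∞ :=
  limsup (fun n => locTerm μ (bowenBall (F n) x ε) (F n).card) atTop

/-- `h̲_μ^{loc}(x,{F_n}) = lim_{ε→0} h̲_μ^{loc}(x,ε,{F_n})` (a monotone limit, i.e. the
supremum over `ε > 0`). -/
noncomputable def lowLocPt (μ : Measure X) (F : ℕ → Finset G) (x : X) : ℝ≥0∞ :=
  ⨆ (ε : ℝ) (_ : 0 < ε), lowLoc μ F x ε

/-- `h̲_μ^{loc}({F_n}) = ∫_X h̲_μ^{loc}(x,{F_n}) dμ(x)`. -/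
noncomputable def lowLocEnt (μ : Measure X) (F : ℕ → Finset G) : ℝ≥0∞ :=
  ∫⁻ x, lowLocPt μ F x ∂μ

/-- A finite measurable partition of `X`, presented as `P : Fin k → Set X`. -/
def IsMeasPartition {k : ℕ} (P : Fin k → Set X) : Prop :=
  (∀ i, MeasurableSet (P i)) ∧ Pairwise (Function.onFun Disjoint P) ∧ (⋃ i, P i) = Set.univ

/-- The static entropy `H_μ(𝒫_F)` of the join `𝒫_F = ⋁_{g∈F} g⁻¹𝒫`; its atoms are the
nonempty sets `⋂_{g∈F} g⁻¹ P(u g)` (distinct choices `u` yield disjoint atoms, and empty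
atoms contribute `0`). -/
noncomputable def partH (μ : Measure X) {k : ℕ} (P : Fin k → Set X) (F : Finset G) : ℝ :=
  letI := Classical.decEq G
  ∑ u : (↥F → Fin k),
    Real.negMulLog ((μ (⋂ g : ↥F, (fun y => (g : G) • y) ⁻¹' P (u g))).toReal)

/-- `h_μ(G,𝒫) = liminf_n (1/|F_n|) H_μ(𝒫_{F_n})`. -/
noncomputable def partEnt (μ : Measure X) (F : ℕ → Finset G) {k : ℕ} (P : Fin k → Set X) : ℝ :=
  liminf (fun n => partH μ P (F n) / (F n).card) atTop

/-- The measure-theoretic entropy `h_μ(X,G) = sup_𝒫 h_μ(G,𝒫)` (it is independent of the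
Følner sequence used to compute it). -/
noncomputable def measEnt (μ : Measure X) (F : ℕ → Finset G) : ℝ≥0∞ :=
  ⨆ (k : ℕ) (P : Fin k → Set X) (_ : IsMeasPartition P), ENNReal.ofReal (partEnt μ F P)

/-- Ergodicity of the `G`-action w.r.t. `μ`. -/
def IsErgodicGAction (G : Type*) [Group G] [MulAction G X] (μ : Measure X) : Prop :=
  ∀ A : Set X, MeasurableSet A → (∀ g : G, (g • ·) ⁻¹' A = A) → μ A = 0 ∨ μ A = 1

end MeasureDefs

/-! ### Combinatorial covering lemmas -/

section Combi

variable [Group G] [DecidableEq G]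

/-- Right translate of a finite set. -/
def tile (E : Finset G) (c : G) : Finset G := E.image (· * c)

theorem mem_tile {E : Finset G} {c g : G} : g ∈ tile E c ↔ g * c⁻¹ ∈ E := by
  unfold tile
  rw [Finset.mem_image]
  constructor
  · rintro ⟨a, ha, rfl⟩; simpa using ha
  · intro h; exact ⟨_, h, by simp⟩

theorem card_tile (E : Finset G) (c : G) : (tile E c).card = E.card :=
  Finset.card_image_of_injective _ (mul_left_injective c)

/-- Points of `E` that some `k ∈ K` moves out of `E`. -/
def badSet (K E : Finset G) : Finset G := E.filter (fun g => ∃ k ∈ K, k * g ∉ E)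

theorem greedy {ι : Type*} [DecidableEq ι] (E : ι → Finset G) (n : ι → ℕ) (δ : ℝ)
    (A : Finset ι) : ∃ T ⊆ A,
      (1 - δ) * ∑ c ∈ T, ((E c).card : ℝ) ≤ ((T.biUnion E).card : ℝ) ∧
      ∀ c ∈ A, c ∉ T →
        δ * (E c).card ≤ ((E c ∩ (T.filter (fun c' => n c ≤ n c')).biUnion E).card : ℝ) := by
  induction A using Finset.induction_on_min_value n with
  | empty => exact ⟨∅, by simp, by simp, by simp⟩
  | insert a A ha hmin ih =>
    obtain ⟨T, hTA, h1, h2⟩ := ih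
    have hfil : T.filter (fun c' => n a ≤ n c') = T :=
      Finset.filter_true_of_mem fun x hx => hmin x (hTA hx)
    by_cases h : δ * (E a).card ≤ ((E a ∩ T.biUnion E).card : ℝ)
    · refine ⟨T, hTA.trans (Finset.subset_insert _ _), h1, ?_⟩
      intro c hc hcT
      rcases Finset.mem_insert.1 hc with rfl | hc
      · rwa [hfil]
      · exact h2 c hc hcT
    · have haT : a ∉ T := fun h' => ha (hTA h')
      refine ⟨insert a T, Finset.insert_subset_insert _ hTA, ?_, ?_⟩
      · rw [Finset.sum_insert haT, Finset.biUnion_insert]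
        have := Finset.card_union_add_card_inter (E a) (T.biUnion E)
        have h3 : (((E a ∪ T.biUnion E).card : ℝ)) + ((E a ∩ T.biUnion E).card : ℝ)
            = (E a).card + ((T.biUnion E).card : ℝ) := by exact_mod_cast this
        push Not at h
        nlinarith
      · intro c hc hcT
        rw [Finset.mem_insert, not_or] at hcT
        have hc' : c ∈ A := (Finset.mem_insert.1 hc).resolve_left hcT.1
        refine (h2 c hc' hcT.2).trans ?_
        have : (T.filter (fun c' => n c ≤ n c')) ⊆ (insert a T).filter (fun c' => n c ≤ n c') :=
          Finset.filter_subset_filter _ (Finset.subset_insert _ _)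
        exact_mod_cast Finset.card_le_card
          (Finset.inter_subset_inter_left (Finset.biUnion_subset_biUnion_of_subset_left _ this))

theorem sum_inter_tile (E B A : Finset G) :
    ∑ c ∈ A, (tile E c ∩ B).card ≤ E.card * B.card := by
  have h : ∀ c ∈ A, (tile E c ∩ B).card = ∑ b ∈ B, if b * c⁻¹ ∈ E then 1 else 0 := by
    intro c _
    rw [Finset.inter_comm, ← Finset.filter_mem_eq_inter, Finset.card_filter]
    exact Finset.sum_congr rfl fun b _ => by simp [mem_tile]
  rw [Finset.sum_congr rfl h, Finset.sum_comm]
  have : ∀ b ∈ B, (∑ c ∈ A, if b * c⁻¹ ∈ E then 1 else 0) ≤ E.card := by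
    intro b _
    rw [← Finset.card_filter]
    refine Finset.card_le_card_of_injOn (fun c => b * c⁻¹) ?_ ?_
    · intro c hc; exact (Finset.mem_filter.1 hc).2
    · intro c _ c' _ h; simpa using h
  calc _ ≤ ∑ b ∈ B, E.card := Finset.sum_le_sum this
    _ = _ := by simp [mul_comm]

theorem covering (F : ℕ → Finset G) {C δ : ℝ} (hδ : 0 < δ) (hδ1 : δ ≤ 1)
    (hC : ∀ n : ℕ,
      ((⋃ k ∈ Finset.range n, ((F k : Set G)⁻¹ * (F n : Set G))).ncard : ℝ) ≤ C * (F n).card)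
    (A : Finset G) (n : G → ℕ) (hne : ∀ c ∈ A, 0 < (F (n c)).card) :
    ∃ T ⊆ A,
      (1 - δ) * ∑ c ∈ T, ((F (n c)).card : ℝ) ≤
        ((T.biUnion fun c => tile (F (n c)) c).card : ℝ) ∧
      (A.card : ℝ) ≤ (C + 1 / δ) * ∑ c ∈ T, ((F (n c)).card : ℝ) := by
  obtain ⟨T, hTA, h1, h2⟩ := greedy (fun c => tile (F (n c)) c) n δ A
  simp only [card_tile] at h1 h2
  refine ⟨T, hTA, h1, ?_⟩
  set P : G → Prop := fun c => ∃ c' ∈ T, n c < n c' ∧ (tile (F (n c)) c ∩ tile (F (n c')) c').Nonempty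
    with hP
  classical
  -- the first class
  have hB : ((A.filter P).card : ℝ) ≤ C * ∑ c ∈ T, ((F (n c)).card : ℝ) := by
    have hfin : ∀ m, (⋃ k ∈ Finset.range m, ((F k : Set G)⁻¹ * (F m : Set G))).Finite := by
      intro m
      refine Set.Finite.biUnion (Finset.finite_toSet _) fun k _ => ?_
      exact (Set.Finite.inv (Finset.finite_toSet _)).mul (Finset.finite_toSet _)
    have hsub : A.filter P ⊆ T.biUnion fun c' => tile (hfin (n c')).toFinset c' := by
      intro c hc
      obtain ⟨_, c', hc', hlt, g, hg⟩ := Finset.mem_filter.1 hc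
      rw [Finset.mem_inter, mem_tile, mem_tile] at hg
      rw [Finset.mem_biUnion]
      refine ⟨c', hc', ?_⟩
      rw [mem_tile, Set.Finite.mem_toFinset]
      simp only [Set.mem_iUnion]
      refine ⟨n c, Finset.mem_range.2 hlt, ?_⟩
      rw [Set.mem_mul]
      exact ⟨(g * c⁻¹)⁻¹, by simpa using hg.1, g * c'⁻¹, hg.2, by group⟩
    have := (Finset.card_le_card hsub).trans Finset.card_biUnion_le
    have h3 : ((A.filter P).card : ℝ) ≤ ∑ c' ∈ T, ((hfin (n c')).toFinset.card : ℝ) := by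
      simp only [card_tile] at this
      exact_mod_cast this
    refine h3.trans ?_
    rw [Finset.mul_sum]
    refine Finset.sum_le_sum fun c' _ => ?_
    rw [← Set.ncard_eq_toFinset_card _ (hfin (n c'))]
    exact hC _
  -- the second class
  have hA2 : ∀ c ∈ A.filter (fun c => ¬ P c), δ * (F (n c)).card ≤
      ∑ c' ∈ T.filter (fun c' => n c' = n c), ((tile (F (n c)) c ∩ tile (F (n c')) c').card : ℝ) := by
    intro c hc
    obtain ⟨hcA, hcP⟩ := Finset.mem_filter.1 hc
    by_cases hcT : c ∈ T
    · have h3 := Finset.single_le_sum (s := T.filter (fun c' => n c' = n c))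
        (f := fun c' => ((tile (F (n c)) c ∩ tile (F (n c')) c').card : ℝ))
        (fun _ _ => by positivity) (Finset.mem_filter.2 ⟨hcT, rfl⟩)
      simp only [Finset.inter_self, card_tile] at h3
      refine le_trans ?_ h3
      exact mul_le_of_le_one_left (by positivity) hδ1
    · refine (h2 c hcA hcT).trans ?_
      have hsub : tile (F (n c)) c ∩
          (T.filter (fun c' => n c ≤ n c')).biUnion (fun c => tile (F (n c)) c) ⊆
          (T.filter (fun c' => n c' = n c)).biUnion
            fun c' => tile (F (n c)) c ∩ tile (F (n c')) c' := by
        intro g hg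
        obtain ⟨hg1, hg2⟩ := Finset.mem_inter.1 hg
        obtain ⟨c', hc', hg3⟩ := Finset.mem_biUnion.1 hg2
        obtain ⟨hc'T, hle⟩ := Finset.mem_filter.1 hc'
        have heq : n c' = n c := by
          by_contra hne'
          exact hcP ⟨c', hc'T, lt_of_le_of_ne hle (Ne.symm hne'), g, Finset.mem_inter.2 ⟨hg1, hg3⟩⟩
        exact Finset.mem_biUnion.2 ⟨c', Finset.mem_filter.2 ⟨hc'T, heq⟩,
          Finset.mem_inter.2 ⟨hg1, hg3⟩⟩
      exact_mod_cast (Finset.card_le_card hsub).trans Finset.card_biUnion_le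
  have hD : ((A.filter (fun c => ¬ P c)).card : ℝ) ≤ (1 / δ) * ∑ c ∈ T, ((F (n c)).card : ℝ) := by
    calc ((A.filter (fun c => ¬ P c)).card : ℝ) = ∑ c ∈ A.filter (fun c => ¬ P c), (1 : ℝ) := by simp
      _ ≤ ∑ c ∈ A.filter (fun c => ¬ P c), ∑ c' ∈ T.filter (fun c' => n c' = n c),
          (1 / (δ * (F (n c')).card)) * ((tile (F (n c')) c ∩ tile (F (n c')) c').card : ℝ) := by
        refine Finset.sum_le_sum fun c hc => ?_
        have h3 := hA2 c hc
        have h4 : (0 : ℝ) < (F (n c)).card := by exact_mod_cast hne c (Finset.mem_filter.1 hc).1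
        have h5 : 0 < δ * ((F (n c)).card : ℝ) := by positivity
        calc (1 : ℝ) ≤ (1 / (δ * (F (n c)).card)) * ∑ c' ∈ T.filter (fun c' => n c' = n c), ((tile (F (n c)) c ∩ tile (F (n c')) c').card : ℝ) := by
              rw [one_div, ← div_eq_inv_mul, le_div_iff₀ h5]; linarith
          _ = _ := by
              rw [Finset.mul_sum]
              refine Finset.sum_congr rfl fun c' hc' => ?_
              rw [(Finset.mem_filter.1 hc').2]
      _ ≤ ∑ c ∈ A, ∑ c' ∈ T.filter (fun c' => n c' = n c),
          (1 / (δ * (F (n c')).card)) * ((tile (F (n c')) c ∩ tile (F (n c')) c').card : ℝ) :=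
        Finset.sum_le_sum_of_subset_of_nonneg (Finset.filter_subset _ _) fun c _ _ =>
          Finset.sum_nonneg fun c' _ => by positivity
      _ ≤ ∑ c ∈ A, ∑ c' ∈ T,
          (1 / (δ * (F (n c')).card)) * ((tile (F (n c')) c ∩ tile (F (n c')) c').card : ℝ) :=
        Finset.sum_le_sum fun c _ => Finset.sum_le_sum_of_subset_of_nonneg
          (Finset.filter_subset _ _) fun c' _ _ => by positivity
      _ = ∑ c' ∈ T, (1 / (δ * (F (n c')).card)) *
            ∑ c ∈ A, ((tile (F (n c')) c ∩ tile (F (n c')) c').card : ℝ) := by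
        rw [Finset.sum_comm]
        exact Finset.sum_congr rfl fun c' _ => by rw [Finset.mul_sum]
      _ ≤ ∑ c' ∈ T, (1 / δ) * ((F (n c')).card : ℝ) := by
        refine Finset.sum_le_sum fun c' hc' => ?_
        have h4 : (0 : ℝ) < (F (n c')).card := by exact_mod_cast hne c' (hTA hc')
        have h5 := sum_inter_tile (F (n c')) (tile (F (n c')) c') A
        rw [card_tile] at h5
        have h6 : ∑ c ∈ A, ((tile (F (n c')) c ∩ tile (F (n c')) c').card : ℝ) ≤
          (F (n c')).card * (F (n c')).card := by exact_mod_cast h5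
        calc _ ≤ (1 / (δ * ((F (n c')).card : ℝ))) * ((F (n c')).card * (F (n c')).card) := by
              gcongr
          _ = _ := by field_simp
      _ = _ := by rw [Finset.mul_sum]
  have := Finset.card_filter_add_card_filter_not (s := A) P
  have h7 : (A.card : ℝ) = (A.filter P).card + ((A.filter (fun c => ¬ P c)).card : ℝ) := by
    exact_mod_cast this.symm
  rw [h7, add_mul]
  exact add_le_add hB hD

theorem badSet_sdiff {ι : Type*} (K Fs : Finset G) (Q : Finset ι) (E : ι → Finset G) :
    (badSet K (Fs \ Q.biUnion E)).card ≤ (badSet K Fs).card +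
      ∑ q ∈ Q, ∑ k ∈ K, ((E q).filter (fun h => k⁻¹ * h ∉ E q)).card := by
  have hsub : badSet K (Fs \ Q.biUnion E) ⊆ badSet K Fs ∪
      Q.biUnion fun q => K.biUnion fun k =>
        ((E q).filter (fun h => k⁻¹ * h ∉ E q)).image (k⁻¹ * ·) := by
    intro g hg
    obtain ⟨hg, k, hk, hkg⟩ := Finset.mem_filter.1 hg
    rw [Finset.mem_sdiff] at hg hkg
    rw [Finset.mem_union]
    by_cases h : k * g ∈ Fs
    · right
      have h2 : k * g ∈ Q.biUnion E := by
        by_contra h'; exact hkg ⟨h, h'⟩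
      obtain ⟨q, hq, hkq⟩ := Finset.mem_biUnion.1 h2
      refine Finset.mem_biUnion.2 ⟨q, hq, Finset.mem_biUnion.2 ⟨k, hk, ?_⟩⟩
      refine Finset.mem_image.2 ⟨k * g, Finset.mem_filter.2 ⟨hkq, ?_⟩, by simp⟩
      intro h'
      rw [inv_mul_cancel_left] at h'
      exact hg.2 (Finset.mem_biUnion.2 ⟨q, hq, h'⟩)
    · left
      exact Finset.mem_filter.2 ⟨hg.1, k, hk, h⟩
  refine (Finset.card_le_card hsub).trans ((Finset.card_union_le _ _).trans ?_)
  gcongr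
  refine Finset.card_biUnion_le.trans (Finset.sum_le_sum fun q _ => ?_)
  exact Finset.card_biUnion_le.trans (Finset.sum_le_sum fun k _ => Finset.card_image_le)

theorem filter_tile_card (E : Finset G) (c k : G) :
    ((tile E c).filter (fun h => k * h ∉ tile E c)).card ≤
      (E.filter (fun h => k * h ∉ E)).card := by
  refine Finset.card_le_card_of_injOn (fun h => h * c⁻¹) ?_ ?_
  · intro h hh
    obtain ⟨h1, h2⟩ := Finset.mem_filter.1 hh
    rw [mem_tile] at h1 h2
    exact Finset.mem_filter.2 ⟨h1, by rwa [← mul_assoc]⟩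
  · intro a _ b _ h; simpa using h

theorem folner_filter {F : ℕ → Finset G} (hFol : IsFolnerSeq F)
    (hcard : Tendsto (fun n => ((F n).card : ℝ)) atTop atTop) (k : G) {ε : ℝ} (hε : 0 < ε) :
    ∀ᶠ n in atTop, (((F n).filter (fun h => k * h ∉ F n)).card : ℝ) ≤ ε * (F n).card := by
  filter_upwards [(hFol k⁻¹).eventually (gt_mem_nhds hε), hcard.eventually_gt_atTop 0]
    with n hn hpos
  rw [div_lt_iff₀ hpos] at hn
  refine le_trans ?_ hn.le
  have : (((F n).filter (fun h => k * h ∉ F n)) : Set G) ⊆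
      symmDiff (F n : Set G) ((k⁻¹ * ·) '' (F n : Set G)) := by
    intro h hh
    obtain ⟨h1, h2⟩ := Finset.mem_filter.1 (Finset.mem_coe.1 hh)
    refine Or.inl ⟨h1, ?_⟩
    rintro ⟨g, hg, rfl⟩
    exact h2 (by simpa using hg)
  have h3 := Set.ncard_le_ncard this
    (((F n).finite_toSet.union ((F n).finite_toSet.image _)).subset symmDiff_le_sup)
  rw [Set.ncard_coe_finset] at h3
  exact_mod_cast h3

theorem badSet_le_sum (K E : Finset G) :
    (badSet K E).card ≤ ∑ k ∈ K, (E.filter (fun h => k * h ∉ E)).card := by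
  have : badSet K E ⊆ K.biUnion fun k => E.filter (fun h => k * h ∉ E) := by
    intro g hg
    obtain ⟨hg, k, hk, hkg⟩ := Finset.mem_filter.1 hg
    exact Finset.mem_biUnion.2 ⟨k, hk, Finset.mem_filter.2 ⟨hg, hkg⟩⟩
  exact (Finset.card_le_card this).trans Finset.card_biUnion_le

theorem folner_bad {F : ℕ → Finset G} (hFol : IsFolnerSeq F)
    (hcard : Tendsto (fun n => ((F n).card : ℝ)) atTop atTop) (K : Finset G) {ε : ℝ}
    (hε : 0 < ε) :
    ∀ᶠ n in atTop, ((badSet K (F n)).card : ℝ) ≤ ε * (F n).card := by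
  have h1 : 0 < ε / (K.card + 1) := by positivity
  have : ∀ᶠ n in atTop, ∀ k ∈ K,
      (((F n).filter (fun h => k * h ∉ F n)).card : ℝ) ≤ ε / (K.card + 1) * (F n).card := by
    rw [Filter.eventually_all_finset]
    exact fun k _ => folner_filter hFol hcard k h1
  filter_upwards [this] with n hn
  have h2 : ((badSet K (F n)).card : ℝ) ≤
      ∑ k ∈ K, (((F n).filter (fun h => k * h ∉ F n)).card : ℝ) := by
    exact_mod_cast badSet_le_sum K (F n)
  refine h2.trans ((Finset.sum_le_sum hn).trans ?_)
  rw [Finset.sum_const, nsmul_eq_mul, ← mul_assoc]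
  gcongr
  rw [mul_div_assoc', div_le_iff₀ (by positivity)]
  nlinarith

end Combi

/-! ### Covering numbers -/

section Cov

variable [Group G] [DecidableEq G] [MetricSpace X] [MulAction G X]

theorem exists_cover_bound {𝒰 : Finset (Set X)} (hU : ⋃₀ (𝒰 : Set (Set X)) = Set.univ)
    (F : Finset G) : ∃ Λ : Finset (G → Set X), Λ.card ≤ 𝒰.card ^ F.card ∧
      (∀ u ∈ Λ, ∀ g ∈ F, u g ∈ 𝒰) ∧
      (⋃ u ∈ Λ, ⋂ g ∈ F, (fun y => g • y) ⁻¹' u g) = Set.univ := by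
  classical
  refine ⟨(Fintype.piFinset (fun _ : ↥F => 𝒰)).image
    (fun v g => if h : g ∈ F then v ⟨g, h⟩ else ∅), ?_, ?_, ?_⟩
  · refine Finset.card_image_le.trans ?_
    simp
  · intro u hu g hg
    obtain ⟨v, hv, rfl⟩ := Finset.mem_image.1 hu
    simp only [dif_pos hg]
    exact Fintype.mem_piFinset.1 hv _
  · rw [Set.eq_univ_iff_forall]
    intro x
    have : ∀ y : X, ∃ U ∈ 𝒰, y ∈ U := by
      intro y
      have : y ∈ ⋃₀ (𝒰 : Set (Set X)) := by rw [hU]; trivial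
      obtain ⟨U, hU, hy⟩ := this
      exact ⟨U, hU, hy⟩
    choose U hU1 hU2 using this
    simp only [Set.mem_iUnion, Set.mem_iInter, Set.mem_preimage]
    refine ⟨_, Finset.mem_image.2 ⟨fun g => U ((g : G) • x),
      Fintype.mem_piFinset.2 fun g => hU1 _, rfl⟩, ?_⟩
    intro g hg
    simp only [dif_pos hg]
    exact hU2 _

theorem coverNum_spec {𝒰 : Finset (Set X)} (hU : ⋃₀ (𝒰 : Set (Set X)) = Set.univ)
    (F : Finset G) : ∃ Λ : Finset (G → Set X), Λ.card = coverNum 𝒰 F ∧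
      (∀ u ∈ Λ, ∀ g ∈ F, u g ∈ 𝒰) ∧
      (⋃ u ∈ Λ, ⋂ g ∈ F, (fun y => g • y) ⁻¹' u g) = Set.univ := by
  obtain ⟨Λ, _, h⟩ := exists_cover_bound hU F
  exact Nat.sInf_mem (s := {k : ℕ | ∃ Λ : Finset (G → Set X), Λ.card = k ∧
    (∀ u ∈ Λ, ∀ g ∈ F, u g ∈ 𝒰) ∧
    (⋃ u ∈ Λ, ⋂ g ∈ F, (fun y => g • y) ⁻¹' u g) = Set.univ}) ⟨_, Λ, rfl, h⟩

theorem coverNum_le_card {𝒰 : Finset (Set X)} {F : Finset G} (Λ : Finset (G → Set X))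
    (h1 : ∀ u ∈ Λ, ∀ g ∈ F, u g ∈ 𝒰)
    (h2 : (⋃ u ∈ Λ, ⋂ g ∈ F, (fun y => g • y) ⁻¹' u g) = Set.univ) :
    coverNum 𝒰 F ≤ Λ.card :=
  Nat.sInf_le ⟨Λ, rfl, h1, h2⟩

theorem coverNum_le_exp {𝒰 : Finset (Set X)} (hU : ⋃₀ (𝒰 : Set (Set X)) = Set.univ)
    (F : Finset G) : (coverNum 𝒰 F : ℝ) ≤ Real.exp (𝒰.card * F.card) := by
  obtain ⟨Λ, h0, h1, h2⟩ := exists_cover_bound hU F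
  have h3 : (coverNum 𝒰 F : ℝ) ≤ (𝒰.card : ℝ) ^ F.card := by
    exact_mod_cast (coverNum_le_card Λ h1 h2).trans h0
  refine h3.trans ?_
  rw [mul_comm, Real.exp_nat_mul]
  gcongr
  linarith [Real.add_one_le_exp (𝒰.card : ℝ)]

theorem coverNum_glue {ι : Type*} {𝒰 : Finset (Set X)} (hU : ⋃₀ (𝒰 : Set (Set X)) = Set.univ)
    (Fs : Finset G) (S : Finset ι) (V : ι → Finset G) (u : ι → G → Set X)
    (hu : ∀ q ∈ S, ∀ g ∈ V q, u q g ∈ 𝒰)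
    (hcov : ∀ x : X, ∃ q ∈ S, ∀ g ∈ V q, g • x ∈ u q g) :
    coverNum 𝒰 Fs ≤ ∑ q ∈ S, coverNum 𝒰 (Fs \ V q) := by
  classical
  choose Λ hΛ1 hΛ2 hΛ3 using fun E : Finset G => coverNum_spec (G := G) hU E
  have key := coverNum_le_card (𝒰 := 𝒰) (F := Fs)
    (S.biUnion fun q => (Λ (Fs \ V q)).image fun v g => if g ∈ V q then u q g else v g) ?_ ?_
  · refine key.trans (Finset.card_biUnion_le.trans (Finset.sum_le_sum fun q _ => ?_))
    exact Finset.card_image_le.trans (hΛ1 _).le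
  · intro w hw g hg
    obtain ⟨q, hq, hw⟩ := Finset.mem_biUnion.1 hw
    obtain ⟨v, hv, rfl⟩ := Finset.mem_image.1 hw
    by_cases h : g ∈ V q
    · simpa [h] using hu q hq g h
    · simpa [h] using hΛ2 _ v hv g (Finset.mem_sdiff.2 ⟨hg, h⟩)
  · rw [Set.eq_univ_iff_forall]
    intro x
    obtain ⟨q, hq, hx⟩ := hcov x
    have := Set.eq_univ_iff_forall.1 (hΛ3 (Fs \ V q)) x
    simp only [Set.mem_iUnion, Set.mem_iInter, Set.mem_preimage] at this ⊢
    obtain ⟨v, hv, hvx⟩ := this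
    refine ⟨_, Finset.mem_biUnion.2 ⟨q, hq, Finset.mem_image.2 ⟨v, hv, rfl⟩⟩, ?_⟩
    intro g hg
    by_cases h : g ∈ V q
    · simpa [h] using hx g h
    · simpa [h] using hvx g (Finset.mem_sdiff.2 ⟨hg, h⟩)

/-- Exponential growth of the covering numbers at rate `t`, up to boundary terms. -/
def PBound (G : Type*) [Group G] [DecidableEq G] [MulAction G X] (𝒰 : Finset (Set X))
    (t : ℝ) : Prop :=
  ∃ (K : Finset G) (A : ℝ), 0 ≤ A ∧ ∀ Fs : Finset G,
    (coverNum 𝒰 Fs : ℝ) ≤ Real.exp (t * Fs.card + A * (badSet K Fs).card)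

theorem badSet_mono {K K' : Finset G} (h : K ⊆ K') (E : Finset G) : badSet K E ⊆ badSet K' E := by
  intro g hg
  obtain ⟨hg, k, hk, hkg⟩ := Finset.mem_filter.1 hg
  exact Finset.mem_filter.2 ⟨hg, k, h hk, hkg⟩

theorem step {F : ℕ → Finset G} (hFol : IsFolnerSeq F)
    (hcard : Tendsto (fun n => ((F n).card : ℝ)) atTop atTop)
    {C δ s ε t t' : ℝ} (hδ : 0 < δ) (hδ1 : δ < 1) (hC0 : 0 < C)
    (hC : ∀ n : ℕ,
      ((⋃ k ∈ Finset.range n, ((F k : Set G)⁻¹ * (F n : Set G))).ncard : ℝ) ≤ C * (F n).card)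
    {𝒰 : Finset (Set X)} (hU : ⋃₀ (𝒰 : Set (Set X)) = Set.univ)
    (hleb : ∀ x : X, ∃ U ∈ 𝒰, Metric.ball x ε ⊆ U)
    (hs : 0 ≤ s)
    (hM : ∀ N : ℕ, ∀ η : ℝ, 0 < η → ∃ I : Finset (X × ℕ), (∀ p ∈ I, N ≤ p.2) ∧
      (∀ x : X, ∃ p ∈ I, x ∈ bowenBall (F p.2) p.1 ε) ∧
      ∑ p ∈ I, Real.exp (-s * (F p.2).card) ≤ η)
    (hσ : s / (1 - δ) ≤ t) (hP : PBound (X := X) G 𝒰 t)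
    (ht' : t - (1 - δ) / (C + 1 / δ) * (t - s / (1 - δ)) < t') : PBound (X := X) G 𝒰 t' := by
  classical
  obtain ⟨K, A, hA, hP⟩ := hP
  set σ := s / (1 - δ) with hσdef
  set γ := (1 - δ) / (C + 1 / δ) with hγ
  have hd : 0 < 1 - δ := by linarith
  have hden : 0 < C + 1 / δ := by positivity
  have hγ0 : 0 < γ := by positivity
  set θ := (t' - (t - γ * (t - σ))) / 2 with hθ
  have hθ0 : 0 < θ := by rw [hθ]; linarith
  set ε1 := θ * (1 - δ) / (A * K.card + 1) with hε1
  have hAK : 0 ≤ A * K.card := by positivity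
  have hε10 : 0 < ε1 := by positivity
  -- choose `N`
  have hev : ∀ᶠ n in atTop, (∀ k ∈ K,
      (((F n).filter (fun h => k⁻¹ * h ∉ F n)).card : ℝ) ≤ ε1 * (F n).card) ∧
      0 < ((F n).card : ℝ) := by
    refine Filter.Eventually.and ?_ (hcard.eventually_gt_atTop 0)
    rw [Filter.eventually_all_finset]
    exact fun k _ => folner_filter hFol hcard k⁻¹ hε10
  obtain ⟨N, hN⟩ := Filter.eventually_atTop.1 hev
  obtain ⟨I, hIN, hIcov, hIsum⟩ := hM N θ hθ0
  choose pt hpt1 hpt2 using hIcov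
  -- labels
  choose U hU1 hU2 using hleb
  set K' : Finset G := K ∪ I.biUnion fun p => F p.2 with hK'
  refine ⟨K', A + (t - σ) * γ, by
    have : 0 ≤ (t - σ) * γ := mul_nonneg (by linarith) hγ0.le
    linarith, ?_⟩
  intro Fs
  set b : ℝ := ((badSet K' Fs).card : ℝ) with hb
  set E : G × (X × ℕ) → Finset G := fun q => tile (F q.2.2) q.1 with hE
  set V : Finset (G × (X × ℕ)) → Finset G := fun Q => Q.biUnion E with hV
  set S : Finset (Finset (G × (X × ℕ))) := (Fs ×ˢ I).powerset.filter fun Q =>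
    V Q ⊆ Fs ∧ (1 - δ) * ∑ q ∈ Q, ((F q.2.2).card : ℝ) ≤ ((V Q).card : ℝ) ∧
      γ * (Fs.card - b) ≤ ((V Q).card : ℝ) with hS
  have hglue : coverNum 𝒰 Fs ≤ ∑ Q ∈ S, coverNum 𝒰 (Fs \ V Q) := by
    refine coverNum_glue hU Fs S V (fun Q g => if h : ∃ q ∈ Q, g ∈ E q then
      U ((g * h.choose.1⁻¹) • h.choose.2.1) else ∅) ?_ ?_
    · intro Q _ g hg
      have h : ∃ q ∈ Q, g ∈ E q := Finset.mem_biUnion.1 hg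
      simp only [dif_pos h]
      exact hU1 _
    · intro x
      set A' := Fs \ badSet K' Fs with hA'
      have hA'sub : ∀ c ∈ A', tile (F (pt (c • x)).2) c ⊆ Fs := by
        intro c hc g hg
        rw [mem_tile] at hg
        obtain ⟨hc1, hc2⟩ := Finset.mem_sdiff.1 hc
        by_contra hgF
        refine hc2 (Finset.mem_filter.2 ⟨hc1, g * c⁻¹, ?_, by simpa using hgF⟩)
        exact Finset.mem_union_right _ (Finset.mem_biUnion.2 ⟨_, hpt1 _, hg⟩)
      obtain ⟨T, hTA, hT1, hT2⟩ := covering F hδ hδ1.le hC A' (fun c => (pt (c • x)).2) (by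
        intro c _
        exact_mod_cast (hN _ (hIN _ (hpt1 (c • x)))).2)
      have hinj : Set.InjOn (fun c : G => (c, pt (c • x))) (T : Set G) := by
        intro a _ b _ h
        exact congrArg Prod.fst h
      refine ⟨T.image fun c => (c, pt (c • x)), ?_, ?_⟩
      · rw [hS, Finset.mem_filter, Finset.mem_powerset]
        have hVeq : V (T.image fun c => (c, pt (c • x))) =
            T.biUnion fun c => tile (F (pt (c • x)).2) c := by
          rw [hV]; simp only [Finset.image_biUnion, hE]
        rw [hVeq, Finset.sum_image hinj]
        refine ⟨?_, ?_, hT1, ?_⟩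
        · intro q hq
          obtain ⟨c, hc, rfl⟩ := Finset.mem_image.1 hq
          exact Finset.mem_product.2 ⟨(Finset.mem_sdiff.1 (hTA hc)).1, hpt1 _⟩
        · exact Finset.biUnion_subset.2 fun c hc => hA'sub c (hTA hc)
        · have h1 : (A'.card : ℝ) = Fs.card - b := by
            have hsub : badSet K' Fs ⊆ Fs := Finset.filter_subset _ _
            rw [hA', Finset.card_sdiff_of_subset hsub, Nat.cast_sub (Finset.card_le_card hsub)]
          rw [← h1]
          refine le_trans ?_ hT1
          rw [hγ, div_mul_eq_mul_div, div_le_iff₀ hden]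
          calc (1 - δ) * (A'.card : ℝ) ≤ (1 - δ) * ((C + 1 / δ) * ∑ c ∈ T, ((F (pt (c • x)).2).card : ℝ)) := by
                gcongr
            _ = _ := by ring
      · intro g hg
        have h : ∃ q ∈ T.image fun c => (c, pt (c • x)), g ∈ E q := Finset.mem_biUnion.1 hg
        simp only [dif_pos h]
        obtain ⟨h1, h2⟩ := h.choose_spec
        obtain ⟨c, hc, hceq⟩ := Finset.mem_image.1 h1
        rw [← hceq] at h2 ⊢
        rw [hE] at h2
        simp only [mem_tile] at h2
        apply hU2
        have h3 := hpt2 (c • x) _ h2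
        rw [Metric.mem_ball, dist_comm]
        simpa [smul_smul] using h3
  -- numeric estimate
  set B : ℝ := t * Fs.card - (t - σ) * (γ * (Fs.card - b)) + A * b + θ * Fs.card with hB
  have hest : ∀ Q ∈ S, (coverNum 𝒰 (Fs \ V Q) : ℝ) ≤
      Real.exp B * ∏ q ∈ Q, Real.exp (-s * (F q.2.2).card) := by
    intro Q hQ
    rw [hS, Finset.mem_filter, Finset.mem_powerset] at hQ
    obtain ⟨hQI, hVF, hQ1, hQ2⟩ := hQ
    refine (hP _).trans ?_
    rw [← Real.exp_sum, ← Real.exp_add, Real.exp_le_exp, ← Finset.mul_sum]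
    set W : ℝ := ∑ q ∈ Q, ((F q.2.2).card : ℝ) with hW
    have hVle : ((V Q).card : ℝ) ≤ Fs.card := by exact_mod_cast Finset.card_le_card hVF
    have hcR : ((Fs \ V Q).card : ℝ) = Fs.card - (V Q).card := by
      rw [Finset.card_sdiff_of_subset hVF, Nat.cast_sub (Finset.card_le_card hVF)]
    have hbadR : ((badSet K (Fs \ V Q)).card : ℝ) ≤ b + K.card * ε1 * W := by
      have h1 := badSet_sdiff K Fs Q E
      have h2 : ((badSet K (Fs \ V Q)).card : ℝ) ≤ (badSet K Fs).card +
        ∑ q ∈ Q, ∑ k ∈ K, (((E q).filter (fun h => k⁻¹ * h ∉ E q)).card : ℝ) := by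
        exact_mod_cast h1
      refine h2.trans (add_le_add ?_ ?_)
      · rw [hb, Nat.cast_le]
        exact Finset.card_le_card (badSet_mono Finset.subset_union_left Fs)
      · rw [hW, Finset.mul_sum]
        refine Finset.sum_le_sum fun q hq => ?_
        have hqI : q.2 ∈ I := (Finset.mem_product.1 (hQI hq)).2
        calc _ ≤ ∑ k ∈ K, ε1 * ((F q.2.2).card : ℝ) := by
              refine Finset.sum_le_sum fun k hk => ?_
              refine le_trans ?_ ((hN _ (hIN _ hqI)).1 k hk)
              exact_mod_cast filter_tile_card (F q.2.2) q.1 k⁻¹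
          _ = _ := by rw [Finset.sum_const, nsmul_eq_mul]; ring
    have hW0 : 0 ≤ W := Finset.sum_nonneg fun _ _ => by positivity
    have hWle : W ≤ (V Q).card / (1 - δ) := by
      rw [le_div_iff₀ hd]; linarith
    have e1 : s * W ≤ σ * (V Q).card := by
      calc s * W ≤ s * ((V Q).card / (1 - δ)) := by gcongr
        _ = _ := by rw [hσdef]; ring
    have e2 : A * (K.card * ε1 * W) ≤ θ * Fs.card := by
      calc A * (K.card * ε1 * W) ≤ A * (K.card * ε1 * (Fs.card / (1 - δ))) := by
            gcongr
            exact hWle.trans (by gcongr)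
        _ = θ * Fs.card * ((A * K.card) / (A * K.card + 1)) := by
            rw [hε1]; field_simp
        _ ≤ θ * Fs.card * 1 := by
            gcongr
            rw [div_le_one (by positivity)]; linarith
        _ = _ := by ring
    have e3 : A * ((badSet K (Fs \ V Q)).card : ℝ) ≤ A * b + A * (K.card * ε1 * W) := by
      rw [← mul_add]; gcongr
    have e4 : (t - σ) * (γ * (Fs.card - b)) ≤ (t - σ) * (V Q).card :=
      mul_le_mul_of_nonneg_left hQ2 (by linarith)
    rw [hcR, hB]
    nlinarith
  have hprod : ∑ Q ∈ S, ∏ q ∈ Q, Real.exp (-s * (F q.2.2).card) ≤ Real.exp (θ * Fs.card) := by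
    calc ∑ Q ∈ S, ∏ q ∈ Q, Real.exp (-s * (F q.2.2).card)
        ≤ ∑ Q ∈ (Fs ×ˢ I).powerset, ∏ q ∈ Q, Real.exp (-s * (F q.2.2).card) :=
          Finset.sum_le_sum_of_subset_of_nonneg (Finset.filter_subset _ _) fun _ _ _ =>
            Finset.prod_nonneg fun _ _ => (Real.exp_pos _).le
      _ = ∏ q ∈ Fs ×ˢ I, (1 + Real.exp (-s * (F q.2.2).card)) := (Finset.prod_one_add _).symm
      _ ≤ Real.exp (∑ q ∈ Fs ×ˢ I, Real.exp (-s * (F q.2.2).card)) :=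
          Real.prod_one_add_le_exp_sum _ fun _ => (Real.exp_pos _).le
      _ ≤ _ := by
          rw [Real.exp_le_exp, Finset.sum_product]
          dsimp only
          rw [Finset.sum_const, nsmul_eq_mul, mul_comm]
          gcongr
  calc (coverNum 𝒰 Fs : ℝ) ≤ ∑ Q ∈ S, (coverNum 𝒰 (Fs \ V Q) : ℝ) := by exact_mod_cast hglue
    _ ≤ ∑ Q ∈ S, Real.exp B * ∏ q ∈ Q, Real.exp (-s * (F q.2.2).card) := Finset.sum_le_sum hest
    _ = Real.exp B * ∑ Q ∈ S, ∏ q ∈ Q, Real.exp (-s * (F q.2.2).card) := by rw [Finset.mul_sum]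
    _ ≤ Real.exp B * Real.exp (θ * Fs.card) := by gcongr
    _ = _ := by
      rw [← Real.exp_add, hB]
      congr 1
      rw [hθ]
      ring

end Cov

section Final

variable [Group G] [MetricSpace X] [MulAction G X]

theorem card_tendsto {F : ℕ → Finset G} (hGrow : GrowthCond F) :
    Tendsto (fun n => ((F n).card : ℝ)) atTop atTop := by
  have hlog : Tendsto (fun n : ℕ => Real.log n) atTop atTop :=
    Real.tendsto_log_atTop.comp tendsto_natCast_atTop_atTop
  refine tendsto_atTop_mono' _ ?_ hlog
  filter_upwards [hGrow.eventually_ge_atTop 1, hlog.eventually_gt_atTop 0] with n h1 h2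
  rwa [le_div_iff₀ h2, one_mul] at h1

theorem coverTerm_nonneg (F : ℕ → Finset G) (𝒰 : Finset (Set X)) (n : ℕ) :
    0 ≤ Real.log (coverNum 𝒰 (F n)) / (F n).card :=
  div_nonneg (Real.log_natCast_nonneg _) (Nat.cast_nonneg _)

theorem coverTerm_le (F : ℕ → Finset G) {𝒰 : Finset (Set X)}
    (hU : ⋃₀ (𝒰 : Set (Set X)) = Set.univ) (n : ℕ) :
    Real.log (coverNum 𝒰 (F n)) / (F n).card ≤ 𝒰.card := by
  classical
  refine div_le_of_le_mul₀ (Nat.cast_nonneg _) (Nat.cast_nonneg _) ?_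
  rcases Nat.eq_zero_or_pos (coverNum 𝒰 (F n)) with h | h
  · rw [h]; simp; positivity
  · rw [Real.log_le_iff_le_exp (by exact_mod_cast h)]
    exact coverNum_le_exp hU _

theorem coverTopEnt_le_of_PBound [DecidableEq G] {F : ℕ → Finset G} (hFol : IsFolnerSeq F)
    (hcard : Tendsto (fun n => ((F n).card : ℝ)) atTop atTop) {𝒰 : Finset (Set X)}
    {t : ℝ} (ht : 0 ≤ t) (hP : PBound (X := X) G 𝒰 t) : coverTopEnt F 𝒰 ≤ t := by
  obtain ⟨K, A, hA, hP⟩ := hP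
  refine le_of_forall_pos_le_add fun κ hκ => ?_
  have hcob : IsCoboundedUnder (· ≤ ·) atTop
      (fun n => Real.log (coverNum 𝒰 (F n)) / (F n).card) :=
    IsCoboundedUnder.of_frequently_ge (a := 0)
      (Eventually.of_forall fun n => coverTerm_nonneg F 𝒰 n).frequently
  refine limsup_le_of_le hcob ?_
  have hκ' : 0 < κ / (A + 1) := by positivity
  filter_upwards [folner_bad hFol hcard K hκ', hcard.eventually_gt_atTop 0] with n hn hpos
  rw [div_le_iff₀ hpos]
  rcases Nat.eq_zero_or_pos (coverNum 𝒰 (F n)) with h | h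
  · rw [h]; simp; positivity
  · rw [Real.log_le_iff_le_exp (by exact_mod_cast h)]
    refine (hP _).trans ?_
    rw [Real.exp_le_exp, add_mul]
    refine add_le_add le_rfl ?_
    calc A * ((badSet K (F n)).card : ℝ) ≤ A * (κ / (A + 1) * (F n).card) := by gcongr
      _ = (A / (A + 1)) * (κ * (F n).card) := by ring
      _ ≤ 1 * (κ * (F n).card) := by
        gcongr
        rw [div_le_one (by positivity)]; linarith
      _ = _ := one_mul _

theorem PBound_all [DecidableEq G] {F : ℕ → Finset G} (hFol : IsFolnerSeq F)
    (hcard : Tendsto (fun n => ((F n).card : ℝ)) atTop atTop)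
    {C δ s ε t : ℝ} (hδ : 0 < δ) (hδ1 : δ < 1) (hC0 : 0 < C)
    (hC : ∀ n : ℕ,
      ((⋃ k ∈ Finset.range n, ((F k : Set G)⁻¹ * (F n : Set G))).ncard : ℝ) ≤ C * (F n).card)
    {𝒰 : Finset (Set X)} (hU : ⋃₀ (𝒰 : Set (Set X)) = Set.univ)
    (hleb : ∀ x : X, ∃ U ∈ 𝒰, Metric.ball x ε ⊆ U)
    (hs : 0 ≤ s)
    (hM : ∀ N : ℕ, ∀ η : ℝ, 0 < η → ∃ I : Finset (X × ℕ), (∀ p ∈ I, N ≤ p.2) ∧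
      (∀ x : X, ∃ p ∈ I, x ∈ bowenBall (F p.2) p.1 ε) ∧
      ∑ p ∈ I, Real.exp (-s * (F p.2).card) ≤ η)
    (ht : s / (1 - δ) < t) : PBound (X := X) G 𝒰 t := by
  have hmono : ∀ a b : ℝ, a ≤ b → PBound (X := X) G 𝒰 a → PBound (X := X) G 𝒰 b := by
    rintro a b hab ⟨K, A, hA, h⟩
    exact ⟨K, A, hA, fun Fs => (h Fs).trans (Real.exp_le_exp.2 (by gcongr))⟩
  have h0 : PBound (X := X) G 𝒰 𝒰.card :=
    ⟨∅, 0, le_rfl, fun Fs => by simpa using coverNum_le_exp hU Fs⟩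
  set σ := s / (1 - δ) with hσ
  set γ := (1 - δ) / (C + 1 / δ) with hγ
  have hd : 0 < 1 - δ := by linarith
  have hden : 0 < C + 1 / δ := by positivity
  have hγ0 : 0 < γ := by positivity
  set T : Set ℝ := {r | σ ≤ r ∧ PBound (X := X) G 𝒰 r} with hT
  have hTne : T.Nonempty := ⟨max σ 𝒰.card, le_max_left _ _, hmono _ _ (le_max_right _ _) h0⟩
  have hTb : BddBelow T := ⟨σ, fun r hr => hr.1⟩
  have hinf : sInf T ≤ σ := by
    by_contra! hlt
    have hpos : 0 < γ * (sInf T - σ) := mul_pos hγ0 (by linarith)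
    obtain ⟨r, hr, hrlt⟩ := exists_lt_of_csInf_lt hTne
      (show sInf T < sInf T + γ * (sInf T - σ) by linarith)
    have hle : sInf T ≤ r := csInf_le hTb hr
    have h1 : r - γ * (r - σ) < sInf T := by nlinarith
    obtain ⟨r', hr'1, hr'2⟩ := exists_between (max_lt h1 hlt)
    have h2 : PBound (X := X) G 𝒰 r' :=
      step hFol hcard hδ hδ1 hC0 hC hU hleb hs hM hr.1 hr.2 ((le_max_left _ _).trans_lt hr'1)
    have h3 : sInf T ≤ r' := csInf_le hTb ⟨((le_max_right _ _).trans_lt hr'1).le, h2⟩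
    linarith
  obtain ⟨r, hr, hrt⟩ := exists_lt_of_csInf_lt hTne (hinf.trans_lt ht)
  exact hmono _ _ hrt.le hr.2

theorem isOpen_bowenBall [ContinuousConstSMul G X] (F : Finset G) (x : X) (ε : ℝ) :
    IsOpen (bowenBall F x ε) := by
  have : bowenBall F x ε = ⋂ g ∈ F, {y : X | dist (g • x) (g • y) < ε} := by
    ext y; simp [bowenBall]
  rw [this]
  refine isOpen_biInter_finset fun g _ => ?_
  exact isOpen_lt (continuous_const.dist (continuous_const_smul g)) continuous_const

theorem topEnt_le_bowenEnt [CompactSpace X] [ContinuousConstSMul G X]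
    {F : ℕ → Finset G} (hFol : IsFolnerSeq F) (hTemp : IsTemperedSeq F)
    (hGrow : GrowthCond F) : topEnt (G := G) X F ≤ bowenEnt F (Set.univ : Set X) := by
  classical
  have hcard := card_tendsto hGrow
  obtain ⟨C, hC0, hC⟩ := hTemp
  refine le_iInf₂ fun s hs => iSup₂_le fun 𝒰 hU => ?_
  obtain ⟨ε, hε, hleb⟩ := lebesgue_number_lemma_of_metric_sUnion (isCompact_univ (X := X))
    (c := (𝒰 : Set (Set X))) (fun U h => hU.1 U h) hU.2.ge
  have hleb' : ∀ x : X, ∃ U ∈ 𝒰, Metric.ball x ε ⊆ U := fun x => hleb x trivial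
  have hM : ∀ N : ℕ, ∀ η : ℝ, 0 < η → ∃ I : Finset (X × ℕ), (∀ p ∈ I, N ≤ p.2) ∧
      (∀ x : X, ∃ p ∈ I, x ∈ bowenBall (F p.2) p.1 ε) ∧
      ∑ p ∈ I, Real.exp (-(max s 0) * (F p.2).card) ≤ η := by
    intro N η hη
    have h0 : ballM F (Set.univ : Set X) N ε s = 0 := by
      refine le_antisymm ?_ (zero_le)
      rw [← hs]
      exact (le_iSup (fun N => ballM F (Set.univ : Set X) N ε s) N).trans
        (le_iSup₂ (f := fun (ε : ℝ) (_ : 0 < ε) => ballMN F (Set.univ : Set X) ε s) ε hε)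
    have h1 : ballM F (Set.univ : Set X) N ε s < ENNReal.ofReal η := by
      rw [h0]; exact ENNReal.ofReal_pos.2 hη
    simp only [ballM, iInf_lt_iff] at h1
    obtain ⟨I, _, hIN, hIcov, hIsum⟩ := h1
    obtain ⟨b, hbI, hbfin, hbcov⟩ := isCompact_univ.elim_finite_subcover_image
      (b := I) (c := fun p : X × ℕ => bowenBall (F p.2) p.1 ε)
      (fun p _ => isOpen_bowenBall _ _ _) hIcov
    refine ⟨hbfin.toFinset, fun p hp => hIN p (hbI (hbfin.mem_toFinset.1 hp)), ?_, ?_⟩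
    · intro x
      have := hbcov (Set.mem_univ x)
      simp only [Set.mem_iUnion] at this
      obtain ⟨p, hp, hx⟩ := this
      exact ⟨p, hbfin.mem_toFinset.2 hp, hx⟩
    · have h2 : ∑ p ∈ hbfin.toFinset, Real.exp (-(max s 0) * (F p.2).card) ≤
          ∑ p ∈ hbfin.toFinset, Real.exp (-s * (F p.2).card) := by
        refine Finset.sum_le_sum fun p _ => Real.exp_le_exp.2 ?_
        gcongr
        exact le_max_left _ _
      refine h2.trans ?_
      rw [← ENNReal.ofReal_le_ofReal_iff hη.le,
        ENNReal.ofReal_sum_of_nonneg fun _ _ => (Real.exp_pos _).le]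
      refine le_trans ?_ hIsum.le
      rw [tsum_subtype I fun p : X × ℕ => ENNReal.ofReal (Real.exp (-s * ((F p.2).card : ℝ)))]
      refine le_trans (le_of_eq ?_) (ENNReal.sum_le_tsum hbfin.toFinset)
      refine Finset.sum_congr rfl fun p hp => ?_
      rw [Set.indicator_of_mem (hbI (hbfin.mem_toFinset.1 hp))]
  have hmax : ENNReal.ofReal s = ENNReal.ofReal (max s 0) := by
    rw [ENNReal.ofReal_max, ENNReal.ofReal_zero, max_eq_left zero_le]
  rw [hmax]
  refine ENNReal.ofReal_le_ofReal ?_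
  refine le_of_forall_gt_imp_ge_of_dense fun t ht => ?_
  have hs0 : 0 ≤ max s 0 := le_max_right _ _
  have htpos : 0 < t := hs0.trans_lt ht
  -- choose δ
  set δ := (t - max s 0) / (2 * t) with hδ
  have hδ0 : 0 < δ := by
    have : 0 < t - max s 0 := by linarith
    positivity
  have hδ1 : δ < 1 := by
    rw [hδ, div_lt_one (by positivity)]; linarith
  have hlt : max s 0 / (1 - δ) < t := by
    rw [div_lt_iff₀ (by linarith)]
    have : t * (1 - δ) = t - (t - max s 0) / 2 := by
      rw [hδ]; field_simp
    rw [this]; linarith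
  exact coverTopEnt_le_of_PBound hFol hcard htpos.le
    (PBound_all hFol hcard hδ0 hδ1 hC0 hC hU.2 hleb' hs0 hM hlt)

theorem bowenEnt_le_topEnt [CompactSpace X]
    {F : ℕ → Finset G} (hGrow : GrowthCond F) :
    bowenEnt F (Set.univ : Set X) ≤ topEnt (G := G) X F := by
  classical
  have hcard := card_tendsto hGrow
  refine ENNReal.le_of_forall_pos_le_add fun κ hκ hfin => ?_
  set h := (topEnt (G := G) X F).toReal with hh
  have hrw : topEnt (G := G) X F + (κ : ℝ≥0∞) = ENNReal.ofReal (h + κ) := by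
    rw [hh, ENNReal.ofReal_add ENNReal.toReal_nonneg κ.coe_nonneg, ENNReal.ofReal_toReal hfin.ne,
      ENNReal.ofReal_coe_nnreal]
  rw [hrw]
  refine iInf₂_le (h + (κ : ℝ)) ?_
  have hκ' : (0 : ℝ) < κ := hκ
  refine le_antisymm (iSup₂_le fun ε hε => iSup_le fun N => ?_) zero_le
  -- finite cover by balls
  obtain ⟨c, _, hcfin, hccov⟩ := isCompact_univ.elim_finite_subcover_image
    (b := (Set.univ : Set X)) (c := fun x : X => Metric.ball x (ε / 2))
    (fun x _ => Metric.isOpen_ball)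
    (fun x _ => Set.mem_iUnion₂.2 ⟨x, trivial, Metric.mem_ball_self (by positivity)⟩)
  set 𝒰 : Finset (Set X) := hcfin.toFinset.image fun x => Metric.ball x (ε / 2) with h𝒰
  have hU : IsFinOpenCover 𝒰 := by
    refine ⟨?_, ?_⟩
    · intro U hU
      obtain ⟨x, _, rfl⟩ := Finset.mem_image.1 hU
      exact Metric.isOpen_ball
    · rw [Set.eq_univ_iff_forall]
      intro x
      obtain ⟨y, hy, hx⟩ := Set.mem_iUnion₂.1 (hccov (Set.mem_univ x))
      exact ⟨_, Finset.mem_coe.2 (Finset.mem_image.2 ⟨y, hcfin.mem_toFinset.2 hy, rfl⟩), hx⟩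
  have hle : coverTopEnt F 𝒰 ≤ h := by
    have h1 : ENNReal.ofReal (coverTopEnt F 𝒰) ≤ topEnt (G := G) X F :=
      le_iSup₂ (f := fun (𝒰 : Finset (Set X)) (_ : IsFinOpenCover 𝒰) =>
        ENNReal.ofReal (coverTopEnt F 𝒰)) 𝒰 hU
    exact (ENNReal.ofReal_le_iff_le_toReal hfin.ne).1 h1
  have hev : ∀ᶠ n in atTop,
      Real.log (coverNum 𝒰 (F n)) / (F n).card < h + κ / 2 := by
    refine eventually_lt_of_limsup_lt (lt_of_le_of_lt hle (by linarith)) ?_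
    exact isBoundedUnder_of ⟨_, fun n => coverTerm_le F hU.2 n⟩
  have hbound : ∀ᶠ n in atTop, ballM F (Set.univ : Set X) N ε (h + κ) ≤
      ENNReal.ofReal (Real.exp (-(κ / 2) * (F n).card)) := by
    filter_upwards [hev, hcard.eventually_gt_atTop 0, eventually_ge_atTop N] with n hn hpos hNn
    rw [div_lt_iff₀ hpos] at hn
    obtain ⟨Λ, hΛ1, hΛ2, hΛ3⟩ := coverNum_spec (G := G) hU.2 (F n)
    set Y : (G → Set X) → Set X := fun u => ⋂ g ∈ F n, (fun y => g • y) ⁻¹' u g with hY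
    set Λ' := Λ.filter fun u => (Y u).Nonempty with hΛ'
    have hex : ∀ u : ↥Λ', ∃ x, x ∈ Y u := fun u => (Finset.mem_filter.1 u.2).2
    choose pt hpt using hex
    set J : Finset (X × ℕ) := Λ'.attach.image fun u => (pt u, n) with hJ
    have hJcard : J.card ≤ coverNum 𝒰 (F n) := by
      refine Finset.card_image_le.trans ?_
      rw [Finset.card_attach, ← hΛ1]
      exact Finset.card_filter_le _ _
    have hJ2 : ∀ p ∈ J, p.2 = n := by
      intro p hp
      obtain ⟨u, _, rfl⟩ := Finset.mem_image.1 hp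
      rfl
    have hle1 : ballM F (Set.univ : Set X) N ε (h + κ) ≤
        ∑' p : (J : Set (X × ℕ)),
          ENNReal.ofReal (Real.exp (-(h + κ) * ((F (p : X × ℕ).2).card : ℝ))) := by
      refine iInf_le_of_le (J : Set (X × ℕ)) (iInf_le_of_le J.countable_toSet
        (iInf_le_of_le (fun p hp => (hJ2 p hp).symm ▸ hNn) (iInf_le_of_le ?_ le_rfl)))
      intro x _
      obtain ⟨u, hu, hxu⟩ := Set.mem_iUnion₂.1 (Set.eq_univ_iff_forall.1 hΛ3 x)
      have huΛ' : u ∈ Λ' := Finset.mem_filter.2 ⟨hu, x, hxu⟩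
      refine Set.mem_iUnion₂.2 ⟨(pt ⟨u, huΛ'⟩, n),
        Finset.mem_coe.2 (Finset.mem_image.2 ⟨⟨u, huΛ'⟩, Finset.mem_attach _ _, rfl⟩), ?_⟩
      intro g hg
      have h1 := Set.mem_iInter₂.1 (hpt ⟨u, huΛ'⟩) g hg
      have h2 := Set.mem_iInter₂.1 hxu g hg
      obtain ⟨z, _, hz⟩ := Finset.mem_image.1 (hΛ2 u hu g hg)
      simp only [Set.mem_preimage] at h1 h2
      rw [← hz, Metric.mem_ball] at h1 h2
      calc _ ≤ dist (g • pt ⟨u, huΛ'⟩) z + dist (g • x) z := dist_triangle_right _ _ _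
        _ < ε := by linarith
    refine hle1.trans ?_
    rw [Finset.tsum_subtype' J fun p : X × ℕ =>
      ENNReal.ofReal (Real.exp (-(h + κ) * ((F p.2).card : ℝ)))]
    rw [Finset.sum_congr rfl (g := fun _ =>
      ENNReal.ofReal (Real.exp (-(h + κ) * ((F n).card : ℝ)))) fun p hp => by rw [hJ2 p hp]]
    rw [← ENNReal.ofReal_sum_of_nonneg fun _ _ => (Real.exp_pos _).le]
    refine ENNReal.ofReal_le_ofReal ?_
    rw [Finset.sum_const, nsmul_eq_mul]
    have hc : (coverNum 𝒰 (F n) : ℝ) ≤ Real.exp ((h + κ / 2) * (F n).card) := by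
      rcases Nat.eq_zero_or_pos (coverNum 𝒰 (F n)) with h0 | h0
      · rw [h0]; simpa using (Real.exp_pos _).le
      · exact ((Real.log_lt_iff_lt_exp (by exact_mod_cast h0)).1 hn).le
    calc (J.card : ℝ) * Real.exp (-(h + κ) * (F n).card)
        ≤ Real.exp ((h + κ / 2) * (F n).card) * Real.exp (-(h + κ) * (F n).card) := by
          gcongr
          exact le_trans (by exact_mod_cast hJcard) hc
      _ = _ := by rw [← Real.exp_add]; congr 1; ring
  have hlim : Tendsto (fun n => ENNReal.ofReal (Real.exp (-(κ / 2) * (F n).card))) atTop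
      (𝓝 0) := by
    rw [← ENNReal.ofReal_zero]
    refine ENNReal.tendsto_ofReal (Real.tendsto_exp_atBot.comp ?_)
    exact hcard.const_mul_atTop_of_neg (by linarith)
  exact ge_of_tendsto hlim hbound

end Final

/-- Main result. For a countable discrete amenable group `G` acting
continuously on a compact metric space `X` and any tempered Følner sequence `{F_n}` with
`lim_n |F_n|/log n = ∞`, the Bowen topological entropy of the whole space equals the
topological entropy. -/
theorem bowenEnt_univ_eq_topEnt
    [Group G] [Countable G] [MetricSpace X] [CompactSpace X]
    [MulAction G X] [ContinuousConstSMul G X]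
    (F : ℕ → Finset G) (hFol : IsFolnerSeq F) (hTemp : IsTemperedSeq F)
    (hGrow : GrowthCond F) :
    bowenEnt F (Set.univ : Set X) = topEnt (G := G) X F := by
  exact le_antisymm (bowenEnt_le_topEnt hGrow) (topEnt_le_bowenEnt hFol hTemp hGrow)
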